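/- arXiv:0706.1529 — 2 statements merged into one kernel-verified Lean document; each statement's English description precedes it below -/
import Mathlib

section
/- Let m ≥ 2 and let P = (X₁,…,X_m;≤) be an m-partite poset. Then B(P) ≤ dim(P) ≤ (m(m−1)/2)·B(P). -/
/-!
The lower bound holds because a realizer of `P` restricts to a realizer of every induced subposet.

For the upper bound, the key fact is `exists_linear_extension_of_subset`: a linear extension `L` of
the subposet on `S` always extends to a linear extension of the whole poset, since
`r ∪ (r ∘ L ∘ r)` is again a partial order. Extend in this way every member of a minimal realizer of
every `P_{i,j}`, `i < j`. As `m ≥ 2`, any two elements `x`, `y` lie together in some `X_i ∪ X_j` with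
`i < j`; if `x ≰ y`, some member of the realizer of `P_{i,j}` places `y` strictly below `x`, hence
so does its extension. The extensions therefore realize `P`, and there are
`∑_{i<j} dim(P_{i,j}) ≤ (m(m-1)/2) · B(P)` of them.

Since `relDim` is an infimum of naturals, which is `0` on the empty set, the argument also needs
that a finite poset has a realizer at all (`exists_realizes`): the family of all its linear
extensions is one.
-/


/-- A family of linear orders `L` realizes the relation `r` if each member is a linear
order and `r x y` holds iff `x` is below `y` in every member of the family. -/
def Realizes {α : Type*} {ι : Type*} (r : α → α → Prop) (L : ι → α → α → Prop) : Prop :=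
  (∀ i, IsLinearOrder α (L i)) ∧ ∀ x y, r x y ↔ ∀ i, L i x y

/-- The order dimension of a relation `r`: the least `d` admitting a realizer of size `d`. -/
noncomputable def relDim {α : Type*} (r : α → α → Prop) : ℕ :=
  sInf {d : ℕ | ∃ L : Fin d → α → α → Prop, Realizes r L}

/-- The order dimension of the subposet induced on the subset `S`. -/
noncomputable def subDim {α : Type*} (r : α → α → Prop) (S : Set α) : ℕ :=
  relDim (fun a b : S => r (a : α) (b : α))

/-- `(X₁,…,X_m; r)` is an `m`-partite poset: the `Xᵢ` are nonempty, pairwise disjoint,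
cover everything, each `Xᵢ` is an antichain, and `x < y` forces `x ∈ Xᵢ`, `y ∈ X_j`
with `i < j`. -/
structure IsMPartite {α : Type*} (r : α → α → Prop) (m : ℕ) (X : Fin m → Set α) : Prop where
  nonempty : ∀ i, (X i).Nonempty
  disjoint : ∀ i j, i ≠ j → Disjoint (X i) (X j)
  cover : ∀ a, ∃ i, a ∈ X i
  antichain : ∀ i, ∀ x ∈ X i, ∀ y ∈ X i, r x y → x = y
  strict : ∀ x y, r x y → x ≠ y → ∃ i j, i < j ∧ x ∈ X i ∧ y ∈ X j

/-- `B(P)`: the maximum of the dimensions of the bipartite subposets `P_{i,j}`, `i < j`. -/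
noncomputable def BP {α : Type*} (r : α → α → Prop) {m : ℕ} (X : Fin m → Set α) : ℕ :=
  Finset.sup (Finset.univ.filter fun p : Fin m × Fin m => p.1 < p.2)
    (fun p => subDim r (X p.1 ∪ X p.2))

theorem relDim_le_card {α : Type*} {ι : Type*} [Fintype ι] {r : α → α → Prop}
    {L : ι → α → α → Prop} (h : Realizes r L) : relDim r ≤ Fintype.card ι := by
  apply Nat.sInf_le
  refine ⟨fun k => L ((Fintype.equivFin ι).symm k), fun k => h.1 _, fun x y => ?_⟩
  rw [h.2, (Fintype.equivFin ι).symm.forall_congr_left]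
  simp

/-- If `x ≰ y`, then some linear extension puts `y` below `x`. -/
theorem exists_linear_extension_reversing {α : Type*} {r : α → α → Prop}
    (hr : IsPartialOrder α r) {x y : α} (hxy : ¬ r x y) :
    ∃ s : α → α → Prop, IsLinearOrder α s ∧ r ≤ s ∧ s y x := by
  have ht : ∀ {a b c}, r a b → r b c → r a c := fun h h' => _root_.trans h h'
  have ha : ∀ {a b}, r a b → r b a → a = b := fun h h' => antisymm h h'
  have : IsPartialOrder α (fun a b => r a b ∨ (r a y ∧ r x b)) :=
    { refl := fun a => Or.inl (refl a)
      trans := by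
        rintro a b c (h | ⟨h, h'⟩) (k | ⟨k, k'⟩)
        · exact Or.inl (ht h k)
        · exact Or.inr ⟨ht h k, k'⟩
        · exact Or.inr ⟨h, ht h' k⟩
        · exact Or.inr ⟨h, k'⟩
      antisymm := by
        rintro a b (h | ⟨h, h'⟩) (k | ⟨k, k'⟩)
        · exact ha h k
        · exact absurd (ht k' (ht h k)) hxy
        · exact absurd (ht h' (ht k h)) hxy
        · exact absurd (ht h' k) hxy }
  obtain ⟨s, hs, hrs⟩ := extend_partialOrder (fun a b => r a b ∨ (r a y ∧ r x b))
  exact ⟨s, hs, fun a b h => hrs a b (Or.inl h), hrs _ _ (Or.inr ⟨refl y, refl x⟩)⟩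

theorem exists_realizes {α : Type*} [Finite α] {r : α → α → Prop} (hr : IsPartialOrder α r) :
    ∃ L : Fin (relDim r) → α → α → Prop, Realizes r L := by
  refine Nat.sInf_mem (s := {d : ℕ | ∃ L : Fin d → α → α → Prop, Realizes r L}) ?_
  let ι := {s : α → α → Prop // IsLinearOrder α s ∧ r ≤ s}
  obtain ⟨n, ⟨e⟩⟩ := Finite.exists_equiv_fin ι
  refine ⟨n, fun k => (e.symm k).1, fun k => (e.symm k).2.1, fun x y => ?_⟩
  refine ⟨fun h k => (e.symm k).2.2 x y h, fun h => ?_⟩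
  by_contra hxy
  obtain ⟨s, hs, hrs, hyx⟩ := exists_linear_extension_reversing hr hxy
  have hs' : s x y := by simpa using h (e ⟨s, hs, hrs⟩)
  obtain rfl : x = y := antisymm hs' hyx
  exact hxy (refl x)

theorem subDim_le_relDim {α : Type*} [Finite α] {r : α → α → Prop} (hr : IsPartialOrder α r)
    (S : Set α) : subDim r S ≤ relDim r := by
  obtain ⟨L, hL, hrL⟩ := exists_realizes hr
  refine Nat.sInf_le ⟨fun k a b => L k a b, fun k => ?_, fun x y => hrL x y⟩
  have := hL k
  exact
    { refl := fun a => refl (r := L k) (a : α)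
      trans := fun a b c h h' => _root_.trans (r := L k) h h'
      antisymm := fun a b h h' => Subtype.ext (antisymm (r := L k) h h')
      total := fun a b => total_of (L k) (a : α) b }

/-- A linear extension of the subposet on `S` extends to a linear extension of the whole poset. -/
theorem exists_linear_extension_of_subset {α : Type*} {r : α → α → Prop}
    (hr : IsPartialOrder α r) {S : Set α} {L : S → S → Prop} (hL : IsLinearOrder S L)
    (hrL : ∀ a b : S, r a b → L a b) :
    ∃ s : α → α → Prop, IsLinearOrder α s ∧ r ≤ s ∧ ∀ a b : S, L a b → s a b := by
  have ht : ∀ {a b c}, r a b → r b c → r a c := fun h h' => _root_.trans h h'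
  have hLt : ∀ {a b c}, L a b → L b c → L a c := fun h h' => _root_.trans h h'
  have hLa : ∀ {a b}, L a b → L b a → a = b := fun h h' => antisymm h h'
  have : IsPartialOrder α (fun a b => r a b ∨ ∃ u v : S, r a u ∧ L u v ∧ r v b) :=
    { refl := fun a => Or.inl (refl a)
      trans := by
        rintro a b c (h | ⟨u, v, h, h', h''⟩) (k | ⟨u', v', k, k', k''⟩)
        · exact Or.inl (ht h k)
        · exact Or.inr ⟨u', v', ht h k, k', k''⟩
        · exact Or.inr ⟨u, v, h, h', ht h'' k⟩
        · exact Or.inr ⟨u, v', h, hLt h' (hLt (hrL _ _ (ht h'' k)) k'), k''⟩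
      -- A cycle in the new relation forces all elements of `S` on it to coincide.
      antisymm := by
        rintro a b (h | ⟨u, v, h, h', h''⟩) (k | ⟨u', v', k, k', k''⟩)
        · exact antisymm (r := r) h k
        · obtain rfl := hLa k' (hrL _ _ (ht k'' (ht h k)))
          exact antisymm (r := r) h (ht k k'')
        · obtain rfl := hLa h' (hrL _ _ (ht h'' (ht k h)))
          exact antisymm (r := r) (ht h h'') k
        · have h₁ := hrL _ _ (ht h'' k)
          have h₂ := hrL _ _ (ht k'' h)
          obtain rfl := hLa h' (hLt h₁ (hLt k' h₂))
          obtain rfl := hLa k' (hLt h₂ h₁)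
          exact antisymm (r := r) (ht h h'') (ht k k'') }
  obtain ⟨s, hs, hrs⟩ :=
    extend_partialOrder (fun a b => r a b ∨ ∃ u v : S, r a u ∧ L u v ∧ r v b)
  exact ⟨s, hs, fun a b h => hrs a b (Or.inl h),
    fun a b h => hrs _ _ (Or.inr ⟨a, b, refl _, h, refl _⟩)⟩

/-- If every two elements lie together in a member of the family `S`, the dimensions of the
induced subposets add up to a bound for the dimension. -/
theorem relDim_le_sum_subDim {α : Type*} [Finite α] {r : α → α → Prop} (hr : IsPartialOrder α r)
    {ι : Type*} [Fintype ι] (S : ι → Set α) (hS : ∀ x y, ∃ i, x ∈ S i ∧ y ∈ S i) :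
    relDim r ≤ ∑ i, subDim r (S i) := by
  have hsub (i : ι) : IsPartialOrder (S i) (fun a b : S i => r (a : α) b) :=
    { refl := fun a => refl (r := r) (a : α)
      trans := fun a b c h h' => _root_.trans (r := r) h h'
      antisymm := fun a b h h' => Subtype.ext (antisymm (r := r) h h') }
  have hreal (i : ι) :
      ∃ L : Fin (subDim r (S i)) → S i → S i → Prop, Realizes (fun a b : S i => r (a : α) b) L :=
    exists_realizes (hsub i)
  choose L hlin hiff using hreal
  choose M hM hrM hLM using fun (i : ι) (k : Fin (subDim r (S i))) =>
    exists_linear_extension_of_subset hr (hlin i k) fun a b h => (hiff i a b).1 h k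
  have hreal : Realizes r (fun p : Σ i, Fin (subDim r (S i)) => M p.1 p.2) := by
    refine ⟨fun p => hM p.1 p.2, fun x y => ⟨fun h p => hrM p.1 p.2 x y h, fun h => ?_⟩⟩
    obtain ⟨i, hx, hy⟩ := hS x y
    refine (hiff i ⟨x, hx⟩ ⟨y, hy⟩).2 fun k => ?_
    have := hlin i k
    have := hM i k
    -- Were `y` below `x` in `L i k`, it would be so in `M i k`, and then `x = y`.
    rcases total_of (L i k) ⟨x, hx⟩ ⟨y, hy⟩ with hl | hl
    · exact hl
    · obtain rfl : x = y := antisymm (r := M i k) (h ⟨i, k⟩) (hLM i k _ _ hl)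
      exact hl
  simpa using relDim_le_card hreal

theorem card_filter_lt (m : ℕ) :
    (Finset.univ.filter fun p : Fin m × Fin m => p.1 < p.2).card = m * (m - 1) / 2 := by
  rw [← Finset.sum_range_id_mul_two, Nat.mul_div_cancel _ two_pos, ← Fin.sum_univ_eq_sum_range,
    Finset.card_filter, Fintype.sum_prod_type_right]
  refine Finset.sum_congr rfl fun j _ => ?_
  rw [← Finset.card_filter, ← Fin.card_Iio j]
  congr 1
  ext i
  simp

/-- For an `m`-partite poset `P` we have `B(P) ≤ dim(P) ≤ (m(m-1)/2)·B(P)`. -/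
theorem BP_le_dim_le_choose_mul_BP {α : Type*} [Fintype α] (r : α → α → Prop)
    (hr : IsPartialOrder α r) {m : ℕ} (hm : 2 ≤ m) (X : Fin m → Set α)
    (hX : IsMPartite r m X) :
    BP r X ≤ relDim r ∧ relDim r ≤ (m * (m - 1) / 2) * BP r X := by
  refine ⟨Finset.sup_le fun p _ => subDim_le_relDim hr _, ?_⟩
  have hcover : ∀ x y, ∃ p : {p : Fin m × Fin m // p.1 < p.2},
      x ∈ X p.1.1 ∪ X p.1.2 ∧ y ∈ X p.1.1 ∪ X p.1.2 := by
    intro x y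
    obtain ⟨i, hi⟩ := hX.cover x
    obtain ⟨j, hj⟩ := hX.cover y
    rcases lt_trichotomy i j with h | rfl | h
    · exact ⟨⟨(i, j), h⟩, Or.inl hi, Or.inr hj⟩
    · -- Both elements are in the same part, which is paired with any other one.
      have : Nontrivial (Fin m) := Fin.nontrivial_iff_two_le.2 hm
      obtain ⟨k, hk⟩ := exists_ne i
      rcases lt_or_gt_of_ne hk with h | h
      · exact ⟨⟨(k, i), h⟩, Or.inr hi, Or.inr hj⟩
      · exact ⟨⟨(i, k), h⟩, Or.inl hi, Or.inl hj⟩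
    · exact ⟨⟨(j, i), h⟩, Or.inr hi, Or.inl hj⟩
  calc relDim r
      ≤ ∑ p : {p : Fin m × Fin m // p.1 < p.2}, subDim r (X p.1.1 ∪ X p.1.2) :=
        relDim_le_sum_subDim hr _ hcover
    _ ≤ ∑ _p : {p : Fin m × Fin m // p.1 < p.2}, BP r X :=
        Finset.sum_le_sum fun p _ =>
          Finset.le_sup (f := fun p : Fin m × Fin m => subDim r (X p.1 ∪ X p.2)) (by simpa using p.2)
    _ = (m * (m - 1) / 2) * BP r X := by
        rw [Finset.sum_const, Finset.card_univ, Fintype.card_subtype, card_filter_lt, smul_eq_mul]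
end

section
/- For all integers d,h,k ≥ 2 there exists an (h+k)-partite poset P with dim(P) = d²hk and B(P) = d². Concretely, let A = {x_{i,j} : (i,j) ∈ [dh]×[dk]} and B = {y_{i,j} : (i,j) ∈ [dh]×[dk]} be disjoint, order A ∪ B by x_{i₁,j₁} < y_{i₂,j₂} iff (i₁,j₁) ≠ (i₂,j₂), and take the parts X_p = {x_{i,j} : (p−1)d < i ≤ pd} for p ∈ [h] followed by Y_q = {y_{i,j} : (q−1)d < j ≤ qd} for q ∈ [k]; this (h+k)-partite poset P satisfies dim(P) = d²hk and B(P) = d². -/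
/-- The order on `A ∪ B` where `A` (left summands) holds the `x_{i,j}` and `B`
(right summands) holds the `y_{i,j}`, `(i,j) ∈ [dh] × [dk]`, with the only strict
relations `x_{i₁,j₁} < y_{i₂,j₂}` iff `(i₁,j₁) ≠ (i₂,j₂)`. -/
def Qle (d h k : ℕ) :
    ((Fin (d * h) × Fin (d * k)) ⊕ (Fin (d * h) × Fin (d * k))) →
    ((Fin (d * h) × Fin (d * k)) ⊕ (Fin (d * h) × Fin (d * k))) → Prop
  | Sum.inl p, Sum.inl p' => p = p'
  | Sum.inl p, Sum.inr q => p ≠ q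
  | Sum.inr _, Sum.inl _ => False
  | Sum.inr q, Sum.inr q' => q = q'

/-- The parts: (0-based) part `t < h` is `X_{t+1} = {x_{i,j} : td ≤ i < (t+1)d}` (with
`i` 0-based), and part `t ≥ h` is `Y_{t-h+1} = {y_{i,j} : (t-h)d ≤ j < (t-h+1)d}`. -/
def Qparts (d h k : ℕ) (t : Fin (h + k)) :
    Set ((Fin (d * h) × Fin (d * k)) ⊕ (Fin (d * h) × Fin (d * k))) :=
  if (t : ℕ) < h then
    {x | ∃ i j, x = Sum.inl (i, j) ∧ (t : ℕ) * d ≤ (i : ℕ) ∧ (i : ℕ) < ((t : ℕ) + 1) * d}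
  else
    {x | ∃ i j, x = Sum.inr (i, j) ∧ ((t : ℕ) - h) * d ≤ (j : ℕ) ∧
      (j : ℕ) < ((t : ℕ) - h + 1) * d}

/-! ### Linear extensions reversing one pair -/

/-- The height function of the linear extension attached to `c`: all `x_a` with `a ≠ c`, then
`y_c`, then `x_c`, then all `y_a` with `a ≠ c`. Inside the two large blocks the order is that of
`s * e`, where `e` enumerates the indices with values in `[0, N)` and `s = ± 1`. -/
def extKey {ι : Type*} [DecidableEq ι] (e : ι → ℤ) (N : ℤ) (c : ι) (s : ℤ) : ι ⊕ ι → ℤ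
  | Sum.inl a => if a = c then 1 else s * e a - 2 * N
  | Sum.inr a => if a = c then 0 else s * e a + 2 * N + 1

lemma extKey_injective {ι : Type*} [DecidableEq ι] {e : ι → ℤ} {N : ℤ}
    (he : Function.Injective e) (h0 : ∀ a, 0 ≤ e a) (hN : ∀ a, e a < N) (c : ι) {s : ℤ}
    (hs : s = 1 ∨ s = -1) : Function.Injective (extKey e N c s) := by
  rintro (a | a) (b | b) hab <;> have := h0 a <;> have := hN a <;> have := h0 b <;>
    have := hN b <;> simp only [extKey] at hab <;>
    rcases hs with rfl | rfl <;> split_ifs at hab <;>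
    first
      | omega
      | (congr 1; exact he (by omega))
      | (congr 1; exact Eq.trans ‹a = c› (Eq.symm ‹b = c›))

/-- The order obtained by pulling back `≤` on `ℤ` along an injection is linear. -/
lemma isLinearOrder_of_key {α : Type*} (f : α → ℤ) (hf : Function.Injective f) :
    IsLinearOrder α (fun a b => f a ≤ f b) where
  refl _ := le_refl _
  trans _ _ _ := le_trans
  antisymm _ _ h1 h2 := hf (le_antisymm h1 h2)
  total _ _ := le_total _ _

/-! ### Dimension of subposets of the standard example -/

section Bounds

variable {d h k : ℕ} {α : Type*}
  (φ : α → (Fin (d * h) × Fin (d * k)) ⊕ (Fin (d * h) × Fin (d * k)))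
  (C : Finset (Fin (d * h) × Fin (d * k)))

/-- A realizer of size `|C|`, whenever `C` contains all indices `c` with both `x_c` and `y_c` in
the subposet embedded by `φ`, and `|C| ≥ 4`. -/
lemma exists_realizer (hφ : Function.Injective φ) (h4 : 4 ≤ C.card)
    (hC : ∀ c a b, φ a = Sum.inl c → φ b = Sum.inr c → c ∈ C) :
    ∃ L : Fin C.card → α → α → Prop, Realizes (fun a b => Qle d h k (φ a) (φ b)) L := by
  obtain ⟨e, N, he, h0, hN⟩ : ∃ (e : Fin (d * h) × Fin (d * k) → ℤ) (N : ℤ),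
      Function.Injective e ∧ (∀ a, 0 ≤ e a) ∧ ∀ a, e a < N := by
    refine ⟨fun a => ((finProdFinEquiv a : ℕ) : ℤ), ((d * h) * (d * k) : ℕ), ?_, ?_, ?_⟩
    · intro a b hab
      exact finProdFinEquiv.injective (Fin.ext (Int.ofNat_inj.1 hab))
    · intro a; positivity
    · intro a; exact Int.ofNat_lt.2 (finProdFinEquiv a).2
  let g : Fin C.card → Fin (d * h) × Fin (d * k) := fun i => (C.equivFin.symm i).1
  have hg : Function.Injective g := fun i j hij => C.equivFin.symm.injective (Subtype.ext hij)
  have hgC : ∀ c ∈ C, ∃ i, g i = c := fun c hc => ⟨C.equivFin ⟨c, hc⟩, by simp [g]⟩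
  let s : Fin C.card → ℤ := fun i => if (i : ℕ) % 2 = 0 then 1 else -1
  have hs : ∀ i, s i = 1 ∨ s i = -1 := fun i => by simp only [s]; split_ifs <;> simp
  -- Each sign is used by two members of the family, hence by one with `g i` different from `b`.
  have hpos : ∀ b, ∃ i, s i = 1 ∧ g i ≠ b := fun b => by
    by_cases hb : g ⟨0, by omega⟩ = b
    · refine ⟨⟨2, by omega⟩, by simp [s], fun h2 => ?_⟩
      have := hg (hb.trans h2.symm)
      simp at this
    · exact ⟨_, by simp [s], hb⟩
  have hneg : ∀ b, ∃ i, s i = -1 ∧ g i ≠ b := fun b => by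
    by_cases hb : g ⟨1, by omega⟩ = b
    · refine ⟨⟨3, by omega⟩, by simp [s], fun h2 => ?_⟩
      have := hg (hb.trans h2.symm)
      simp at this
    · exact ⟨_, by simp [s], hb⟩
  refine ⟨fun i a b => extKey e N (g i) (s i) (φ a) ≤ extKey e N (g i) (s i) (φ b),
    fun i => isLinearOrder_of_key _ ((extKey_injective he h0 hN _ (hs i)).comp hφ), ?_⟩
  intro x y
  have hcom := fun c => hC c x y
  rcases hx : φ x with a | a <;> rcases hy : φ y with b | b <;> simp only [hx, hy] at hcom ⊢ <;>
    simp only [Qle]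
  · refine ⟨fun hab i => by rw [hab], fun H => ?_⟩
    by_contra hab
    by_cases ha : a ∈ C
    · obtain ⟨i, rfl⟩ := hgC a ha
      have := H i
      have := h0 b
      have := hN b
      rcases hs i with hi | hi <;> simp [extKey, Ne.symm hab, hi] at * <;> omega
    · have hne : ∀ i, a ≠ g i := fun i hi => ha (hi ▸ (C.equivFin.symm i).2)
      have hlt : e a ≠ e b := fun h => hab (he h)
      rcases lt_or_gt_of_ne hlt with hlt | hlt
      · obtain ⟨i, hi, hib⟩ := hneg b
        have := H i
        simp [extKey, hne, hib.symm, hi] at this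
        omega
      · obtain ⟨i, hi, hib⟩ := hpos b
        have := H i
        simp [extKey, hne, hib.symm, hi] at this
        omega
  · constructor
    · intro hab i
      have := h0 a
      have := hN a
      have := h0 b
      have := hN b
      rcases hs i with hi | hi <;> simp only [extKey, hi] <;> split_ifs <;>
        first | omega | simp_all
    · rintro H rfl
      obtain ⟨i, rfl⟩ := hgC a (hcom a rfl rfl)
      have := H i
      simp [extKey] at this
  · simp only [false_iff, not_forall, not_le]
    obtain ⟨i, hi, hib⟩ := hpos b
    refine ⟨i, ?_⟩
    have := h0 a
    have := hN a
    have := h0 b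
    have := hN b
    simp only [extKey, hi, if_neg hib.symm]
    split_ifs <;> omega
  · refine ⟨fun hab i => by rw [hab], fun H => ?_⟩
    by_contra hab
    by_cases hb : b ∈ C
    · obtain ⟨i, rfl⟩ := hgC b hb
      have := H i
      have := h0 a
      have := hN a
      rcases hs i with hi | hi <;> simp [extKey, hab, hi] at * <;> omega
    · have hne : ∀ i, b ≠ g i := fun i hi => hb (hi ▸ (C.equivFin.symm i).2)
      have hlt : e a ≠ e b := fun h => hab (he h)
      rcases lt_or_gt_of_ne hlt with hlt | hlt
      · obtain ⟨i, hi, hia⟩ := hneg a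
        have := H i
        simp [extKey, hne, hia.symm, hi] at this
        omega
      · obtain ⟨i, hi, hia⟩ := hpos a
        have := H i
        simp [extKey, hne, hia.symm, hi] at this
        omega

lemma relDim_le_card_s9 (hφ : Function.Injective φ) (h4 : 4 ≤ C.card)
    (hC : ∀ c a b, φ a = Sum.inl c → φ b = Sum.inr c → c ∈ C) :
    relDim (fun a b => Qle d h k (φ a) (φ b)) ≤ C.card :=
  Nat.sInf_le (exists_realizer φ C hφ h4 hC)

/-- If `x_c` and `y_c` belong to the subposet for every `c ∈ C`, then every realizer has at least
`|C|` members, because each member reverses at most one pair `x_c`, `y_c`. -/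
lemma card_le_of_realizes (hC : ∀ c ∈ C, ∃ a b, φ a = Sum.inl c ∧ φ b = Sum.inr c) {n : ℕ}
    {L : Fin n → α → α → Prop} (hL : Realizes (fun a b => Qle d h k (φ a) (φ b)) L) :
    C.card ≤ n := by
  obtain ⟨hlin, hr⟩ := hL
  have hex : ∀ c : C, ∃ i a b, φ a = Sum.inl c.1 ∧ φ b = Sum.inr c.1 ∧ L i b a := by
    rintro ⟨c, hc⟩
    obtain ⟨a, b, ha, hb⟩ := hC c hc
    have h1 : ¬ ∀ i, L i a b := by
      rw [← hr]; simp [ha, hb, Qle]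
    obtain ⟨i, hi⟩ := not_forall.1 h1
    exact ⟨i, a, b, ha, hb, ((hlin i).total a b).resolve_left hi⟩
  choose f a b ha hb hf using hex
  have hinj : Function.Injective f := by
    intro c c' hcc
    by_contra hne
    have hne' : c.1 ≠ c'.1 := fun h => hne (Subtype.ext h)
    have h1 : L (f c) (a c) (b c') := (hr _ _).1 (by simpa [ha, hb, Qle] using hne') _
    have h2 : L (f c) (a c') (b c) := (hr _ _).1 (by simpa [ha, hb, Qle] using hne'.symm) _
    have h3 := hf c'
    rw [← hcc] at h3
    have h4 : L (f c) (b c') (a c) :=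
      (hlin _).trans _ _ _ h3 ((hlin _).trans _ _ _ h2 (hf c))
    have h5 := (hlin _).antisymm _ _ h1 h4
    have := ha c
    rw [h5, hb] at this
    simp at this
  simpa using Fintype.card_le_of_injective f hinj

lemma card_le_relDim (hC : ∀ c ∈ C, ∃ a b, φ a = Sum.inl c ∧ φ b = Sum.inr c)
    -- Some realizer must exist, as `sInf ∅ = 0`.
    (hne : ∃ n, ∃ L : Fin n → α → α → Prop, Realizes (fun a b => Qle d h k (φ a) (φ b)) L) :
    C.card ≤ relDim (fun a b => Qle d h k (φ a) (φ b)) := by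
  obtain ⟨L, hL⟩ := Nat.sInf_mem hne
  exact card_le_of_realizes φ C hC hL

end Bounds

/-! ### Blocks of indices -/

/-- The `p`-th block of `d` consecutive indices in `[0, dh)`. -/
def block (d h p : ℕ) : Finset (Fin (d * h)) :=
  Finset.univ.filter fun i => p * d ≤ (i : ℕ) ∧ (i : ℕ) < (p + 1) * d

lemma mem_block {d h p : ℕ} (i : Fin (d * h)) :
    i ∈ block d h p ↔ p * d ≤ (i : ℕ) ∧ (i : ℕ) < (p + 1) * d := by
  simp [block]

lemma card_block {d h p : ℕ} (hp : p < h) : (block d h p).card = d := by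
  have hle : (p + 1) * d ≤ d * h := by
    rw [mul_comm d h]; exact Nat.mul_le_mul_right _ hp
  have : (block d h p).map Fin.valEmbedding = Finset.Ico (p * d) ((p + 1) * d) := by
    ext i
    simp only [Finset.mem_map, mem_block, Fin.valEmbedding_apply, Finset.mem_Ico]
    exact ⟨by rintro ⟨j, hj, rfl⟩; exact hj, fun hi => ⟨⟨i, by omega⟩, hi, rfl⟩⟩
  rw [← Finset.card_map, this, Nat.card_Ico, Nat.succ_mul]
  omega

/-! ### The partition into `X`-parts and `Y`-parts -/

section Parts

variable {d h k : ℕ}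

lemma inl_mem_Qparts (t : Fin (h + k)) (c : Fin (d * h) × Fin (d * k)) :
    Sum.inl c ∈ Qparts d h k t ↔ (t : ℕ) < h ∧ c.1 ∈ block d h t := by
  rcases c with ⟨i, j⟩
  unfold Qparts
  split_ifs with ht
  · simp [ht, mem_block]
  · simp [ht]

lemma inr_mem_Qparts (t : Fin (h + k)) (c : Fin (d * h) × Fin (d * k)) :
    Sum.inr c ∈ Qparts d h k t ↔ h ≤ (t : ℕ) ∧ c.2 ∈ block d k (t - h) := by
  rcases c with ⟨i, j⟩
  unfold Qparts
  split_ifs with ht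
  · simp [ht]
  · simp [not_lt.1 ht, mem_block]

lemma mem_block_iff (hd : 0 < d) {p : ℕ} (i : Fin (d * h)) :
    i ∈ block d h p ↔ (i : ℕ) / d = p := by
  rw [mem_block, Nat.div_eq_iff hd, Nat.succ_mul]
  omega

lemma div_lt (i : Fin (d * h)) : (i : ℕ) / d < h :=
  Nat.div_lt_of_lt_mul i.2

lemma exists_mem_block (hd : 0 < d) {p : ℕ} (hp : p < h) : ∃ i, i ∈ block d h p :=
  Finset.card_pos.1 (by rw [card_block hp]; exact hd)

lemma isMPartite_Q (hd : 0 < d) (hh : 0 < h) (hk : 0 < k) :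
    IsMPartite (Qle d h k) (h + k) (Qparts d h k) where
  nonempty t := by
    rcases lt_or_ge (t : ℕ) h with ht | ht
    · obtain ⟨i, hi⟩ := exists_mem_block hd ht
      obtain ⟨j, -⟩ := exists_mem_block hd hk
      exact ⟨Sum.inl (i, j), (inl_mem_Qparts t _).2 ⟨ht, hi⟩⟩
    · obtain ⟨i, -⟩ := exists_mem_block hd hh
      obtain ⟨j, hj⟩ := exists_mem_block (h := k) (p := t - h) hd (by omega)
      exact ⟨Sum.inr (i, j), (inr_mem_Qparts t _).2 ⟨ht, hj⟩⟩
  disjoint t u htu := by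
    rw [Set.disjoint_left]
    rintro (c | c) h1 h2
    · rw [inl_mem_Qparts, mem_block_iff hd] at h1 h2
      exact htu (Fin.ext (h1.2.symm.trans h2.2))
    · rw [inr_mem_Qparts, mem_block_iff hd] at h1 h2
      exact htu (Fin.ext (by omega))
  cover := by
    rintro (c | c)
    · have := div_lt c.1
      exact ⟨⟨(c.1 : ℕ) / d, by omega⟩,
        (inl_mem_Qparts _ _).2 ⟨this, (mem_block_iff hd _).2 rfl⟩⟩
    · have := div_lt c.2
      exact ⟨⟨h + (c.2 : ℕ) / d, by omega⟩,
        (inr_mem_Qparts _ _).2 ⟨by simp, (mem_block_iff hd _).2 (by simp)⟩⟩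
  antichain := by
    rintro t (a | a) ha (b | b) hb hab
    · exact congrArg _ hab
    · rw [inl_mem_Qparts] at ha
      rw [inr_mem_Qparts] at hb
      omega
    · exact hab.elim
    · exact congrArg _ hab
  strict := by
    rintro (a | a) (b | b) hab hne
    · exact (hne (congrArg _ hab)).elim
    · have h1 := div_lt a.1
      have h2 := div_lt b.2
      exact ⟨⟨(a.1 : ℕ) / d, by omega⟩, ⟨h + (b.2 : ℕ) / d, by omega⟩,
        Fin.mk_lt_mk.2 (h1.trans_le (Nat.le_add_right _ _)),
        (inl_mem_Qparts _ _).2 ⟨h1, (mem_block_iff hd _).2 rfl⟩,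
        (inr_mem_Qparts _ _).2 ⟨by simp, (mem_block_iff hd _).2 (by simp)⟩⟩
    · exact hab.elim
    · exact (hne (congrArg _ hab)).elim

/-- Any two parts have their common indices inside a `d × d` block. -/
lemma exists_block_cover (hh : 0 < h) (hk : 0 < k) {t u : Fin (h + k)} (htu : t < u) :
    ∃ p < h, ∃ q < k, ∀ (c : Fin (d * h) × Fin (d * k))
      (a b : ↥(Qparts d h k t ∪ Qparts d h k u)),
      a.1 = Sum.inl c → b.1 = Sum.inr c → c ∈ block d h p ×ˢ block d k q := by
  by_cases hc : (t : ℕ) < h ∧ h ≤ (u : ℕ)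
  · refine ⟨t, hc.1, u - h, by omega, ?_⟩
    rintro c ⟨_, ha⟩ ⟨_, hb⟩ rfl rfl
    rw [Set.mem_union, inl_mem_Qparts, inl_mem_Qparts] at ha
    rw [Set.mem_union, inr_mem_Qparts, inr_mem_Qparts] at hb
    rw [Finset.mem_product]
    exact ⟨(ha.resolve_right (by omega)).2, (hb.resolve_left (by omega)).2⟩
  · refine ⟨0, hh, 0, hk, ?_⟩
    rintro c ⟨_, ha⟩ ⟨_, hb⟩ rfl rfl
    rw [Set.mem_union, inl_mem_Qparts, inl_mem_Qparts] at ha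
    rw [Set.mem_union, inr_mem_Qparts, inr_mem_Qparts] at hb
    have : (t : ℕ) < u := htu
    omega

end Parts

/-- For all `d,h,k ≥ 2`, the concrete `(h+k)`-partite poset above satisfies
`dim(P) = d²hk` and `B(P) = d²`. -/
theorem concrete_mpartite_example {d h k : ℕ} (hd : 2 ≤ d) (hh : 2 ≤ h) (hk : 2 ≤ k) :
    IsMPartite (Qle d h k) (h + k) (Qparts d h k) ∧
      relDim (Qle d h k) = d ^ 2 * h * k ∧
      BP (Qle d h k) (Qparts d h k) = d ^ 2 := by
  have hd4 : 4 ≤ d * d := Nat.mul_le_mul hd hd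
  have hcard : ∀ p < h, ∀ q < k, (block d h p ×ˢ block d k q).card = d * d := fun p hp q hq => by
    rw [Finset.card_product, card_block hp, card_block hq]
  refine ⟨isMPartite_Q (by omega) (by omega) (by omega), ?_, ?_⟩
  · have hu : (Finset.univ : Finset (Fin (d * h) × Fin (d * k))).card = d ^ 2 * h * k := by
      simp; ring
    have h4 : 4 ≤ (Finset.univ : Finset (Fin (d * h) × Fin (d * k))).card := by
      rw [← hcard 0 (by omega) 0 (by omega)] at hd4
      exact hd4.trans (Finset.card_le_univ _)
    rw [← hu]
    exact le_antisymm
      (relDim_le_card_s9 id _ Function.injective_id h4 fun _ _ _ _ _ => Finset.mem_univ _)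
      (card_le_relDim id _ (fun c _ => ⟨_, _, rfl, rfl⟩)
        ⟨_, exists_realizer id _ Function.injective_id h4 fun _ _ _ _ _ => Finset.mem_univ _⟩)
  · rw [pow_two]
    apply le_antisymm
    · refine Finset.sup_le fun ⟨t, u⟩ htu => ?_
      obtain ⟨p, hp, q, hq, hC⟩ :=
        exists_block_cover (d := d) (by omega) (by omega) (Finset.mem_filter.1 htu).2
      rw [← hcard p hp q hq] at hd4 ⊢
      exact relDim_le_card_s9 _ _ Subtype.val_injective hd4 hC
    · -- The bound is attained by the first `X`-part together with the first `Y`-part.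
      let t : Fin (h + k) := ⟨0, by omega⟩
      let u : Fin (h + k) := ⟨h, by omega⟩
      have htu : t < u := by rw [Fin.mk_lt_mk]; omega
      refine le_trans ?_ (Finset.le_sup (f := fun p : Fin (h + k) × Fin (h + k) =>
        subDim (Qle d h k) (Qparts d h k p.1 ∪ Qparts d h k p.2))
        (Finset.mem_filter.2 ⟨Finset.mem_univ (t, u), htu⟩))
      obtain ⟨p, hp, q, hq, hC⟩ := exists_block_cover (d := d) (by omega) (by omega) htu
      have h4 := hd4
      rw [← hcard p hp q hq] at h4
      rw [← hcard 0 (by omega) 0 (by omega)]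
      refine card_le_relDim _ _ (fun c hc => ?_)
        ⟨_, exists_realizer _ _ Subtype.val_injective h4 hC⟩
      rw [Finset.mem_product] at hc
      exact ⟨⟨Sum.inl c, Or.inl ((inl_mem_Qparts _ _).2 ⟨by simp [t]; omega, hc.1⟩)⟩,
        ⟨Sum.inr c, Or.inr ((inr_mem_Qparts _ _).2 ⟨le_refl h, by simpa [u] using hc.2⟩)⟩, rfl, rfl⟩
end
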